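/- arXiv:2003.03874 — 4 statements merged into one kernel-verified Lean document; each statement's English description precedes it below -/
import Mathlib

section
/- Let σ > 0 and v > 0 be real numbers and let m̄ = (−(1+v²) + √(1 + 2v² + 4σv³ + 9v⁴)) / (2v(2v+σ)). Then the point m = (m̄, m̄) is an equilibrium of the Seeley vector field with equal option values, i.e., f((m̄, m̄), (v, v)) = 0 (both components vanish). -/
/-- The Seeley et al. vector field on `ℝ² × ℝ²` with parameter `σ`:
its `i`-th component is `v_i m_U − m_i (1/v_i − v_i m_U + σ m_j)`, with
`m_U = 1 − m₁ − m₂`. -/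
noncomputable def seeley (σ : ℝ) (m v : ℝ × ℝ) : ℝ × ℝ :=
  (v.1 * (1 - m.1 - m.2) - m.1 * (1 / v.1 - v.1 * (1 - m.1 - m.2) + σ * m.2),
   v.2 * (1 - m.1 - m.2) - m.2 * (1 / v.2 - v.2 * (1 - m.1 - m.2) + σ * m.1))

theorem seeley_diag {σ v : ℝ} (hv : v ≠ 0) (m : ℝ) :
    seeley σ (m, m) (v, v) =
      (-(v * (2 * v + σ) * (m * m) + (1 + v ^ 2) * m + -v ^ 2) / v,
       -(v * (2 * v + σ) * (m * m) + (1 + v ^ 2) * m + -v ^ 2) / v) := by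
  ext <;>
  · simp only [seeley]
    field_simp
    ring

theorem seeley_diag_eq_zero_iff {σ v : ℝ} (hv : v ≠ 0) (m : ℝ) :
    seeley σ (m, m) (v, v) = (0, 0) ↔
      v * (2 * v + σ) * (m * m) + (1 + v ^ 2) * m + -v ^ 2 = 0 := by
  simp only [seeley_diag hv, Prod.mk.injEq, and_self, div_eq_zero_iff, neg_eq_zero, hv, or_false]

theorem discrim_seeley_diag (σ v : ℝ) :
    discrim (v * (2 * v + σ)) (1 + v ^ 2) (-v ^ 2) =
      1 + 2 * v ^ 2 + 4 * σ * v ^ 3 + 9 * v ^ 4 := by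
  rw [discrim]
  ring

theorem seeley_symmetric_equilibrium_general {σ v : ℝ} (hv : v ≠ 0) (hvσ : 2 * v + σ ≠ 0)
    (hD : 0 ≤ 1 + 2 * v ^ 2 + 4 * σ * v ^ 3 + 9 * v ^ 4) (m : ℝ) :
    seeley σ (m, m) (v, v) = (0, 0) ↔
      m = (-(1 + v ^ 2) + √(1 + 2 * v ^ 2 + 4 * σ * v ^ 3 + 9 * v ^ 4)) /
        (2 * v * (2 * v + σ)) ∨
      m = (-(1 + v ^ 2) - √(1 + 2 * v ^ 2 + 4 * σ * v ^ 3 + 9 * v ^ 4)) /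
        (2 * v * (2 * v + σ)) := by
  have hdiscrim := (discrim_seeley_diag σ v).trans (Real.mul_self_sqrt hD).symm
  rw [seeley_diag_eq_zero_iff hv, quadratic_eq_zero_iff (mul_ne_zero hv hvσ) hdiscrim,
    ← mul_assoc 2 v]

/-- for `σ > 0`, `v > 0`, the symmetric point `(mbar, mbar)` with
`mbar = (−(1+v²) + √(1 + 2v² + 4σv³ + 9v⁴)) / (2v(2v+σ))` is an equilibrium of
the Seeley vector field with equal option values `(v, v)`. -/
theorem seeley_symmetric_equilibrium (σ v : ℝ) (hσ : 0 < σ) (hv : 0 < v) (mbar : ℝ)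
    (hm : mbar = (-(1 + v ^ 2) + Real.sqrt (1 + 2 * v ^ 2 + 4 * σ * v ^ 3 + 9 * v ^ 4)) /
      (2 * v * (2 * v + σ))) :
    seeley σ (mbar, mbar) (v, v) = (0, 0) :=
  (seeley_symmetric_equilibrium_general hv.ne' (by positivity) (by positivity) mbar).mpr
    (Or.inl hm)
end

section
/- Let σ ∈ ℝ, v > 0 and m̄ ∈ ℝ. The map F : ℝ² → ℝ², F(m) = f(m, (v, v)), is differentiable at the point (m̄, m̄), and its Fréchet derivative L at (m̄, m̄) satisfies L(1, −1) = λ₁ · (1, −1) and L(1, 1) = λ₂ · (1, 1), where λ₁ = (−2m̄v² + v² − 1)/v and λ₂ = (−4m̄v² − 2m̄σv − v² − 1)/v. Equivalently, the Jacobian matrix of F at (m̄, m̄) is the symmetric 2×2 matrix with diagonal entries −1/v − 3vm̄ − σm̄ and off-diagonal entries −v(1+m̄) − σm̄, whose eigenvalues are λ₁ and λ₂ with eigenvectors (1, −1) and (1, 1), respectively. -/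
/-!
The two components of the vector field are the same function of (own parameter, own state, other
state), so its derivative is known once the two partial derivatives of that function are. On the
diagonal `v₁ = v₂`, `m₁ = m₂` the Jacobian therefore has the form `!![a, b; b, a]`, whose
eigenvectors `(1, 1)` and `(1, -1)` have eigenvalues `a + b` and `a - b`.
-/

section SwapSymmetric

variable {R M F : Type*} {L : F} {a b : R} {x y : M} [FunLike F M M]

theorem map_add_eq_smul_of_swap_symmetric [Semiring R] [AddCommMonoid M] [Module R M]
    [AddMonoidHomClass F M M] (hx : L x = a • x + b • y) (hy : L y = b • x + a • y) :
    L (x + y) = (a + b) • (x + y) := by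
  rw [map_add, hx, hy, add_smul, smul_add, smul_add]
  abel

theorem map_sub_eq_smul_of_swap_symmetric [Ring R] [AddCommGroup M] [Module R M]
    [AddMonoidHomClass F M M] (hx : L x = a • x + b • y) (hy : L y = b • x + a • y) :
    L (x - y) = (a - b) • (x - y) := by
  rw [map_sub, hx, hy, sub_smul, smul_sub, smul_sub]
  abel

end SwapSymmetric

/-- One component of the Seeley vector field, as a function of the parameter `w` and state `x`
carrying its own index and the state `y` carrying the other index. -/
noncomputable def seeleyComponent (σ w x y : ℝ) : ℝ :=
  w * (1 - x - y) - x * (1 / w - w * (1 - x - y) + σ * y)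

/-- The partial derivative of `seeleyComponent σ w x y` in its own state `x`. -/
noncomputable def seeleyOwnPartial (σ w x y : ℝ) : ℝ :=
  -w - (1 / w - w * (1 - x - y) + σ * y) - w * x

/-- The partial derivative of `seeleyComponent σ w x y` in the other state `y`; there is no
argument `y` because the component is affine in `y`. -/
noncomputable def seeleyCrossPartial (σ w x : ℝ) : ℝ :=
  -(w * (1 + x)) - σ * x

/-- The Jacobian of `m ↦ seeley σ m v` at `m`, as a continuous linear map on `ℝ × ℝ`; the two
arguments of `ContinuousLinearMap.prod` are the rows of the Jacobian matrix. -/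
noncomputable def seeleyJacobian (σ : ℝ) (m v : ℝ × ℝ) : ℝ × ℝ →L[ℝ] ℝ × ℝ :=
  (seeleyOwnPartial σ v.1 m.1 m.2 • ContinuousLinearMap.fst ℝ ℝ ℝ +
    seeleyCrossPartial σ v.1 m.1 • ContinuousLinearMap.snd ℝ ℝ ℝ).prod
  (seeleyOwnPartial σ v.2 m.2 m.1 • ContinuousLinearMap.snd ℝ ℝ ℝ +
    seeleyCrossPartial σ v.2 m.2 • ContinuousLinearMap.fst ℝ ℝ ℝ)

theorem seeley_eq_seeleyComponent (σ : ℝ) (m v : ℝ × ℝ) :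
    seeley σ m v = (seeleyComponent σ v.1 m.1 m.2, seeleyComponent σ v.2 m.2 m.1) := by
  simp only [seeley, seeleyComponent, sub_right_comm 1 m.2 m.1]

theorem hasFDerivAt_seeleyComponent {E : Type*} [NormedAddCommGroup E] [NormedSpace ℝ E]
    {x y : E → ℝ} {x' y' : E →L[ℝ] ℝ} {p : E} (σ w : ℝ)
    (hx : HasFDerivAt x x' p) (hy : HasFDerivAt y y' p) :
    HasFDerivAt (fun q => seeleyComponent σ w (x q) (y q))
      (seeleyOwnPartial σ w (x p) (y p) • x' + seeleyCrossPartial σ w (x p) • y') p := by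
  have hgain : HasFDerivAt (fun q => w * (1 - x q - y q)) (w • (-x' - y')) p :=
    ((hx.const_sub 1).sub hy).const_mul w
  have hloss : HasFDerivAt (fun q => 1 / w - w * (1 - x q - y q) + σ * y q)
      (-(w • (-x' - y')) + σ • y') p :=
    (hgain.const_sub (1 / w)).add (hy.const_mul σ)
  refine (hgain.sub (hx.mul hloss)).congr_fderiv ?_
  simp only [seeleyOwnPartial, seeleyCrossPartial]
  module

theorem hasFDerivAt_seeley (σ : ℝ) (m v : ℝ × ℝ) :
    HasFDerivAt (fun m => seeley σ m v) (seeleyJacobian σ m v) m := by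
  simp only [seeley_eq_seeleyComponent]
  exact (hasFDerivAt_seeleyComponent σ v.1 hasFDerivAt_fst hasFDerivAt_snd).prodMk
    (hasFDerivAt_seeleyComponent σ v.2 hasFDerivAt_snd hasFDerivAt_fst)

section Diagonal

variable (σ v m : ℝ)

theorem seeleyOwnPartial_self : seeleyOwnPartial σ v m m = -1 / v - 3 * v * m - σ * m := by
  rw [seeleyOwnPartial]
  ring

theorem seeleyJacobian_diag_apply_one_zero :
    seeleyJacobian σ (m, m) (v, v) (1, 0) =
      (-1 / v - 3 * v * m - σ * m, -(v * (1 + m)) - σ * m) := by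
  simp [seeleyJacobian, seeleyOwnPartial_self, seeleyCrossPartial]

theorem seeleyJacobian_diag_apply_zero_one :
    seeleyJacobian σ (m, m) (v, v) (0, 1) =
      (-(v * (1 + m)) - σ * m, -1 / v - 3 * v * m - σ * m) := by
  simp [seeleyJacobian, seeleyOwnPartial_self, seeleyCrossPartial]

variable {v}

theorem seeleyJacobian_diag_apply_one_neg_one (hv : v ≠ 0) :
    seeleyJacobian σ (m, m) (v, v) (1, -1) =
      ((-2 * m * v ^ 2 + v ^ 2 - 1) / v) • ((1 : ℝ), (-1 : ℝ)) := by
  have heigenvalue : (-2 * m * v ^ 2 + v ^ 2 - 1) / v =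
      (-1 / v - 3 * v * m - σ * m) - (-(v * (1 + m)) - σ * m) := by
    field_simp
    ring
  have heigenvector : ((1 : ℝ), (-1 : ℝ)) = (1, 0) - (0, 1) := by simp
  rw [heigenvector, heigenvalue]
  exact map_sub_eq_smul_of_swap_symmetric
    (by simp [seeleyJacobian_diag_apply_one_zero])
    (by simp [seeleyJacobian_diag_apply_zero_one])

theorem seeleyJacobian_diag_apply_one_one (hv : v ≠ 0) :
    seeleyJacobian σ (m, m) (v, v) (1, 1) =
      ((-4 * m * v ^ 2 - 2 * m * σ * v - v ^ 2 - 1) / v) • ((1 : ℝ), (1 : ℝ)) := by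
  have heigenvalue : (-4 * m * v ^ 2 - 2 * m * σ * v - v ^ 2 - 1) / v =
      (-1 / v - 3 * v * m - σ * m) + (-(v * (1 + m)) - σ * m) := by
    field_simp
    ring
  have heigenvector : ((1 : ℝ), (1 : ℝ)) = (1, 0) + (0, 1) := by simp
  rw [heigenvector, heigenvalue]
  exact map_add_eq_smul_of_swap_symmetric
    (by simp [seeleyJacobian_diag_apply_one_zero])
    (by simp [seeleyJacobian_diag_apply_zero_one])

end Diagonal

/-- the map `F(m) = f(m, (v, v))` is differentiable at `(mbar, mbar)`,
its Fréchet derivative there sends `(1, −1) ↦ λ₁ • (1, −1)` and `(1, 1) ↦ λ₂ • (1, 1)`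
with `λ₁ = (−2 mbar v² + v² − 1)/v`, `λ₂ = (−4 mbar v² − 2 mbar σ v − v² − 1)/v`;
equivalently its Jacobian matrix is symmetric with diagonal entries
`−1/v − 3 v mbar − σ mbar` and off-diagonal entries `−v(1+mbar) − σ mbar` (the
columns being the images of `(1,0)` and `(0,1)`). -/
theorem seeley_symmetric_jacobian (σ v mbar : ℝ) (hv : 0 < v) :
    DifferentiableAt ℝ (fun m : ℝ × ℝ => seeley σ m (v, v)) (mbar, mbar) ∧
    fderiv ℝ (fun m : ℝ × ℝ => seeley σ m (v, v)) (mbar, mbar) (1, -1)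
      = ((-2 * mbar * v ^ 2 + v ^ 2 - 1) / v) • ((1 : ℝ), (-1 : ℝ)) ∧
    fderiv ℝ (fun m : ℝ × ℝ => seeley σ m (v, v)) (mbar, mbar) (1, 1)
      = ((-4 * mbar * v ^ 2 - 2 * mbar * σ * v - v ^ 2 - 1) / v) • ((1 : ℝ), (1 : ℝ)) ∧
    fderiv ℝ (fun m : ℝ × ℝ => seeley σ m (v, v)) (mbar, mbar) (1, 0)
      = ((-1 / v - 3 * v * mbar - σ * mbar), (-(v * (1 + mbar)) - σ * mbar)) ∧
    fderiv ℝ (fun m : ℝ × ℝ => seeley σ m (v, v)) (mbar, mbar) (0, 1)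
      = ((-(v * (1 + mbar)) - σ * mbar), (-1 / v - 3 * v * mbar - σ * mbar)) := by
  have hF := hasFDerivAt_seeley σ (mbar, mbar) (v, v)
  rw [hF.fderiv]
  exact ⟨hF.differentiableAt,
    seeleyJacobian_diag_apply_one_neg_one σ mbar hv.ne',
    seeleyJacobian_diag_apply_one_one σ mbar hv.ne',
    seeleyJacobian_diag_apply_one_zero σ v mbar,
    seeleyJacobian_diag_apply_zero_one σ v mbar⟩
end

section
/- Let v > 1 and σ > 0, and let m̄ = (−(1+v²) + √(1 + 2v² + 4σv³ + 9v⁴)) / (2v(2v+σ)). Set λ₁ = (−2m̄v² + v² − 1)/v and λ₂ = (−4m̄v² − 2m̄σv − v² − 1)/v. Then: (i) m̄ > 0 and λ₂ < 0; (ii) λ₁ = 0 if and only if σ = 4v³/(v² − 1)²; (iii) λ₁ > 0 if and only if σ > 4v³/(v² − 1)². In particular, the symmetric equilibrium of the Seeley vector field loses stability (the eigenvalue λ₁ of its Jacobian increases through zero) exactly as σ increases through the critical value σ* = 4v³/(v² − 1)². -/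
/-!
On the diagonal `m₁ = m₂ = x` the equilibrium condition is a quadratic equation `Q x = 0`, where
`Q` is strictly increasing on `[0, ∞)` and `m̄` is its positive root. The eigenvalue `λ₁` equals
`2 v (m⋆ - m̄)` with `m⋆ = (v² - 1) / (2 v²)`, so its sign is that of `Q m⋆ - Q m̄ = Q m⋆`. Finally
`Q m⋆` is affine in `σ`, with positive slope and zero `σ⋆ = 4 v³ / (v² - 1)²`.
-/

section Quadratic

theorem strictMonoOn_quadratic {R : Type*} [Semiring R] [PartialOrder R] [IsStrictOrderedRing R]
    {a b : R} (ha : 0 ≤ a) (hb : 0 < b) (c : R) :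
    StrictMonoOn (fun x ↦ a * x ^ 2 + b * x + c) (Set.Ici 0) := by
  intro x hx y _ hxy
  have hsq : a * x ^ 2 ≤ a * y ^ 2 :=
    mul_le_mul_of_nonneg_left (pow_le_pow_left₀ hx hxy.le 2) ha
  have hlin : b * x < b * y := mul_lt_mul_of_pos_left hxy hb
  exact add_lt_add_left (add_lt_add_of_le_of_lt hsq hlin) c

theorem quadratic_root_eq_zero {a b c : ℝ} (ha : a ≠ 0) (hD : 0 ≤ discrim a b c) :
    a * ((-b + √(discrim a b c)) / (2 * a)) ^ 2 + b * ((-b + √(discrim a b c)) / (2 * a)) + c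
      = 0 := by
  rw [sq]
  exact (quadratic_eq_zero_iff ha (Real.mul_self_sqrt hD).symm _).mpr (Or.inl rfl)

theorem quadratic_root_pos {a c : ℝ} (ha : 0 < a) (b : ℝ) (hc : c < 0) :
    0 < (-b + √(discrim a b c)) / (2 * a) := by
  have hb : b < √(discrim a b c) := by
    apply Real.lt_sqrt_of_sq_lt
    rw [discrim]
    linarith [mul_neg_of_pos_of_neg ha hc]
  exact div_pos (by linarith) (by positivity)

end Quadratic

namespace Seeley

section Definitions

variable {K : Type*} [Field K]

/-- The quadratic cutting out the symmetric equilibria: `-v` times either component of the Seeley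
vector field at `m = (x, x)` with equal values `(v, v)`. -/
def equilibriumPoly (v σ x : K) : K :=
  v * (2 * v + σ) * x ^ 2 + (1 + v ^ 2) * x + -v ^ 2

/-- The eigenvalue `λ₁` of the Jacobian at `(m, m)`, with eigenvector `(1, -1)`. -/
def transverseEigenvalue (v m : K) : K :=
  (-2 * m * v ^ 2 + v ^ 2 - 1) / v

/-- The eigenvalue `λ₂` of the Jacobian at `(m, m)`, with eigenvector `(1, 1)`. -/
def diagonalEigenvalue (v σ m : K) : K :=
  (-4 * m * v ^ 2 - 2 * m * σ * v - v ^ 2 - 1) / v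

/-- The value `m⋆` of `m` at which the transverse eigenvalue vanishes. -/
def criticalState (v : K) : K :=
  (v ^ 2 - 1) / (2 * v ^ 2)

/-- The value `σ⋆` of `σ` at which the pitchfork bifurcation occurs. It is meaningful only for
`v ^ 2 ≠ 1`, the quotient being `0` otherwise. -/
def criticalSigma (v : K) : K :=
  4 * v ^ 3 / (v ^ 2 - 1) ^ 2

/-- The common coordinate `m̄` of the symmetric equilibrium, as the larger root of
`equilibriumPoly v σ` when `v * (2 * v + σ)` is positive. -/
noncomputable def symmetricEquilibrium (v σ : ℝ) : ℝ :=
  (-(1 + v ^ 2) + √(1 + 2 * v ^ 2 + 4 * σ * v ^ 3 + 9 * v ^ 4)) / (2 * v * (2 * v + σ))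

end Definitions

section CharZero

variable {K : Type*} [Field K] [CharZero K] {v m : K}

theorem transverseEigenvalue_eq (hv : v ≠ 0) (m : K) :
    transverseEigenvalue v m = 2 * v * (criticalState v - m) := by
  rw [transverseEigenvalue, criticalState]
  field_simp
  ring

theorem transverseEigenvalue_eq_zero_iff (hv : v ≠ 0) :
    transverseEigenvalue v m = 0 ↔ m = criticalState v := by
  rw [transverseEigenvalue_eq hv, mul_eq_zero_iff_left (mul_ne_zero two_ne_zero hv),
    sub_eq_zero, eq_comm]

theorem equilibriumPoly_criticalState (hv : v ≠ 0) (hv₁ : v ^ 2 - 1 ≠ 0) (σ : K) :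
    equilibriumPoly v σ (criticalState v) =
      (v ^ 2 - 1) ^ 2 / (4 * v ^ 3) * (σ - criticalSigma v) := by
  rw [equilibriumPoly, criticalState, criticalSigma]
  field_simp
  ring

end CharZero

section OrderedField

variable {K : Type*} [Field K] [LinearOrder K] [IsStrictOrderedRing K] {v σ m : K}

theorem transverseEigenvalue_pos_iff (hv : 0 < v) :
    0 < transverseEigenvalue v m ↔ m < criticalState v := by
  rw [transverseEigenvalue_eq hv.ne', mul_pos_iff_of_pos_left (by positivity), sub_pos]

theorem diagonalEigenvalue_neg (hv : 0 < v) (hσ : 0 ≤ 2 * v + σ) (hm : 0 ≤ m) :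
    diagonalEigenvalue v σ m < 0 := by
  have hslope : 0 < 2 * (v * (2 * v + σ)) * m + (1 + v ^ 2) := by positivity
  exact div_neg_of_neg_of_pos (by linarith) hv

theorem criticalState_pos (hv : 1 < v) : 0 < criticalState v :=
  div_pos (sub_pos.mpr (one_lt_pow₀ hv two_ne_zero)) (by positivity)

theorem strictMonoOn_equilibriumPoly (hv : 0 ≤ v) (hσ : 0 ≤ 2 * v + σ) :
    StrictMonoOn (equilibriumPoly v σ) (Set.Ici 0) :=
  strictMonoOn_quadratic (mul_nonneg hv hσ) (by positivity) _

theorem equilibriumPoly_criticalState_eq_zero_iff (hv : 1 < v) :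
    equilibriumPoly v σ (criticalState v) = 0 ↔ σ = criticalSigma v := by
  have hv₁ : 0 < v ^ 2 - 1 := sub_pos.mpr (one_lt_pow₀ hv two_ne_zero)
  rw [equilibriumPoly_criticalState (by positivity) hv₁.ne',
    mul_eq_zero_iff_left (by positivity), sub_eq_zero]

theorem equilibriumPoly_criticalState_pos_iff (hv : 1 < v) :
    0 < equilibriumPoly v σ (criticalState v) ↔ criticalSigma v < σ := by
  have hv₁ : 0 < v ^ 2 - 1 := sub_pos.mpr (one_lt_pow₀ hv two_ne_zero)
  rw [equilibriumPoly_criticalState (by positivity) hv₁.ne',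
    mul_pos_iff_of_pos_left (by positivity), sub_pos]

theorem eq_criticalState_iff (hv : 1 < v) (hσ : 0 ≤ 2 * v + σ) (hm : 0 ≤ m)
    (hroot : equilibriumPoly v σ m = 0) : m = criticalState v ↔ σ = criticalSigma v := by
  have hmono := strictMonoOn_equilibriumPoly (by positivity) hσ
  rw [← hmono.injOn.eq_iff hm (criticalState_pos hv).le, hroot, eq_comm,
    equilibriumPoly_criticalState_eq_zero_iff hv]

theorem lt_criticalState_iff (hv : 1 < v) (hσ : 0 ≤ 2 * v + σ) (hm : 0 ≤ m)
    (hroot : equilibriumPoly v σ m = 0) : m < criticalState v ↔ criticalSigma v < σ := by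
  have hmono := strictMonoOn_equilibriumPoly (by positivity) hσ
  rw [← hmono.lt_iff_lt hm (criticalState_pos hv).le, hroot,
    equilibriumPoly_criticalState_pos_iff hv]

end OrderedField

section SymmetricEquilibrium

variable {v σ : ℝ}

theorem symmetricEquilibrium_eq_quadratic_root (v σ : ℝ) :
    symmetricEquilibrium v σ =
      (-(1 + v ^ 2) + √(discrim (v * (2 * v + σ)) (1 + v ^ 2) (-v ^ 2))) /
        (2 * (v * (2 * v + σ))) := by
  rw [symmetricEquilibrium, discrim]
  ring_nf

theorem symmetricEquilibrium_pos (hv : 0 < v) (hσ : 0 < 2 * v + σ) :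
    0 < symmetricEquilibrium v σ := by
  rw [symmetricEquilibrium_eq_quadratic_root]
  exact quadratic_root_pos (mul_pos hv hσ) _ (neg_lt_zero.mpr (by positivity))

theorem equilibriumPoly_symmetricEquilibrium (hv : 0 < v) (hσ : 0 < 2 * v + σ) :
    equilibriumPoly v σ (symmetricEquilibrium v σ) = 0 := by
  have hD : 0 ≤ discrim (v * (2 * v + σ)) (1 + v ^ 2) (-v ^ 2) := by
    rw [discrim, mul_neg, sub_neg_eq_add]
    positivity
  rw [symmetricEquilibrium_eq_quadratic_root]
  exact quadratic_root_eq_zero (mul_pos hv hσ).ne' hD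

end SymmetricEquilibrium

end Seeley

open Seeley in
theorem seeley_pitchfork_critical_sigma_general {v σ : ℝ} (hv : 1 < v) (hσ : 0 < 2 * v + σ) :
    (0 < symmetricEquilibrium v σ ∧ diagonalEigenvalue v σ (symmetricEquilibrium v σ) < 0) ∧
    (transverseEigenvalue v (symmetricEquilibrium v σ) = 0 ↔ σ = criticalSigma v) ∧
    (0 < transverseEigenvalue v (symmetricEquilibrium v σ) ↔ criticalSigma v < σ) := by
  have hv₀ : 0 < v := by positivity
  have hpos := symmetricEquilibrium_pos hv₀ hσ
  have hroot := equilibriumPoly_symmetricEquilibrium hv₀ hσ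
  refine ⟨⟨hpos, diagonalEigenvalue_neg hv₀ hσ.le hpos.le⟩, ?_, ?_⟩
  · rw [transverseEigenvalue_eq_zero_iff hv₀.ne', eq_criticalState_iff hv hσ.le hpos.le hroot]
  · rw [transverseEigenvalue_pos_iff hv₀, lt_criticalState_iff hv hσ.le hpos.le hroot]

/-- for `v > 1`, `σ > 0`, and `mbar`, `λ₁`, `λ₂` as in the analysis of the
symmetric equilibrium of the Seeley dynamics: (i) `mbar > 0` and `λ₂ < 0`;
(ii) `λ₁ = 0 ↔ σ = 4v³/(v²−1)²`; (iii) `λ₁ > 0 ↔ σ > 4v³/(v²−1)²`.  Hence the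
eigenvalue `λ₁` of the Jacobian increases through zero exactly as `σ` increases
through the critical value `σ* = 4v³/(v²−1)²`. -/
theorem seeley_pitchfork_critical_sigma (v σ : ℝ) (hv : 1 < v) (hσ : 0 < σ)
    (mbar : ℝ)
    (hm : mbar = (-(1 + v ^ 2) + Real.sqrt (1 + 2 * v ^ 2 + 4 * σ * v ^ 3 + 9 * v ^ 4)) /
      (2 * v * (2 * v + σ)))
    (lam₁ lam₂ : ℝ)
    (hl1 : lam₁ = (-2 * mbar * v ^ 2 + v ^ 2 - 1) / v)
    (hl2 : lam₂ = (-4 * mbar * v ^ 2 - 2 * mbar * σ * v - v ^ 2 - 1) / v) :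
    (0 < mbar ∧ lam₂ < 0) ∧
    (lam₁ = 0 ↔ σ = 4 * v ^ 3 / (v ^ 2 - 1) ^ 2) ∧
    (0 < lam₁ ↔ 4 * v ^ 3 / (v ^ 2 - 1) ^ 2 < σ) := by
  subst hm hl1 hl2
  exact seeley_pitchfork_critical_sigma_general hv (by linarith)
end

section
/- Let σ ∈ ℝ, K > 0, m = (m₁, m₂) ∈ ℝ² and v = (v₁, v₂) with v₁, v₂ > 0. Set Δm = m₁ − m₂, m̄ = (m₁ + m₂)/2, Δv = v₁ − v₂ and v̄ = (v₁ + v₂)/2. Then the difference of the components of the Seeley vector field with scaled values satisfies the identity f₁(m, Kv) − f₂(m, Kv) = −( (2m̄ + Δm)/(K(2v̄ + Δv)) − (2m̄ − Δm)/(K(2v̄ − Δv)) ) + K v̄ Δm (1 − 2m̄) + K Δv (1 − 2m̄)(1 + m̄); that is, in mean–difference coordinates the dynamics of Δm take the stated rational-polynomial form, and in particular the σ-dependent terms cancel from the Δm equation. -/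
section MeanDifference

variable {F : Type*} [Field F] [NeZero (2 : F)]

theorem two_mul_mean_add_sub (a b : F) : 2 * ((a + b) / 2) + (a - b) = 2 * a := by
  rw [mul_div_cancel₀ _ two_ne_zero, add_add_sub_cancel, two_mul]

theorem two_mul_mean_sub_sub (a b : F) : 2 * ((a + b) / 2) - (a - b) = 2 * b := by
  rw [mul_div_cancel₀ _ two_ne_zero, add_sub_sub_cancel, two_mul]

theorem two_mul_div_mul_two_mul (a b c : F) : 2 * a / (c * (2 * b)) = a / (c * b) := by
  rw [mul_left_comm, mul_div_mul_left _ _ two_ne_zero]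

theorem mul_sub_mul_eq_mean_mul_sub_add_sub_mul_mean (a b c d : F) :
    a * c - b * d = (a + b) / 2 * (c - d) + (a - b) * ((c + d) / 2) := by
  field_simp
  ring

end MeanDifference

-- The interaction term `σ * m.1 * m.2` is symmetric in the two components, so it cancels.
theorem seeley_fst_sub_snd (σ : ℝ) (m v : ℝ × ℝ) :
    (seeley σ m v).1 - (seeley σ m v).2 =
      -(m.1 / v.1 - m.2 / v.2) +
        (v.1 * (1 + m.1) - v.2 * (1 + m.2)) * (1 - (m.1 + m.2)) := by
  simp only [seeley]
  ring

/-- in mean–difference coordinates `Δm = m₁ − m₂`, `m̄ = (m₁+m₂)/2`,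
`Δv = v₁ − v₂`, `v̄ = (v₁+v₂)/2`, the difference of the two components of the Seeley
vector field with values scaled by a gain `K > 0` satisfies
`f₁(m, Kv) − f₂(m, Kv) = −((2m̄+Δm)/(K(2v̄+Δv)) − (2m̄−Δm)/(K(2v̄−Δv)))
  + K v̄ Δm (1−2m̄) + K Δv (1−2m̄)(1+m̄)`;
in particular the `σ`-dependent terms cancel from the `Δm` equation. -/
theorem seeley_mean_difference_form (σ K : ℝ) (hK : 0 < K) (m v : ℝ × ℝ)
    (hv1 : 0 < v.1) (hv2 : 0 < v.2)
    (Δm mbar Δv vbar : ℝ)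
    (hΔm : Δm = m.1 - m.2) (hmbar : mbar = (m.1 + m.2) / 2)
    (hΔv : Δv = v.1 - v.2) (hvbar : vbar = (v.1 + v.2) / 2) :
    (seeley σ m (K * v.1, K * v.2)).1 - (seeley σ m (K * v.1, K * v.2)).2 =
      -((2 * mbar + Δm) / (K * (2 * vbar + Δv)) -
          (2 * mbar - Δm) / (K * (2 * vbar - Δv))) +
        K * vbar * Δm * (1 - 2 * mbar) + K * Δv * (1 - 2 * mbar) * (1 + mbar) := by
  have value_difference : v.1 * (1 + m.1) - v.2 * (1 + m.2) =
      vbar * Δm + Δv * (1 + mbar) := by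
    rw [mul_sub_mul_eq_mean_mul_sub_add_sub_mul_mean, hΔm, hmbar, hΔv, hvbar]
    ring
  have uncommitted : 1 - (m.1 + m.2) = 1 - 2 * mbar := by
    rw [hmbar, mul_div_cancel₀ _ two_ne_zero]
  have decay_fst : (2 * mbar + Δm) / (K * (2 * vbar + Δv)) = m.1 / (K * v.1) := by
    rw [hmbar, hΔm, hvbar, hΔv, two_mul_mean_add_sub, two_mul_mean_add_sub,
      two_mul_div_mul_two_mul]
  have decay_snd : (2 * mbar - Δm) / (K * (2 * vbar - Δv)) = m.2 / (K * v.2) := by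
    rw [hmbar, hΔm, hvbar, hΔv, two_mul_mean_sub_sub, two_mul_mean_sub_sub,
      two_mul_div_mul_two_mul]
  rw [seeley_fst_sub_snd, decay_fst, decay_snd, uncommitted, mul_assoc K, mul_assoc K,
    ← mul_sub, value_difference]
  ring
end
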